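/- Let Γ be a lattice in G = PSL(2,ℂ) and let xH be a closed H-orbit in Γ\G. Then there is an open subset O of Γ\G containing xH such that every closed H-orbit yH with yH ⊆ O is equal to xH. (This is the homogeneous formulation of the statement that every properly immersed geodesic plane in a hyperbolic 3-manifold of finite volume is topologically isolated.) -/

import Mathlib

open scoped MatrixGroups
open Matrix Filter

noncomputable section

/-- `SL(2,ℂ)`. -/
abbrev SL2C := Matrix.SpecialLinearGroup (Fin 2) ℂ

instance : TopologicalSpace SL2C := instTopologicalSpaceSubtype

/-- `G = PSL(2,ℂ) = SL(2,ℂ)/{±I}`, with the quotient topology. -/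
abbrev PSL2C := Matrix.ProjectiveSpecialLinearGroup (Fin 2) ℂ

/-- The projection `π : SL(2,ℂ) → PSL(2,ℂ)`. -/
def pr : SL2C →* PSL2C := QuotientGroup.mk' _

/-- The upper triangular unipotent matrix `[[1, t],[0, 1]]` as an element of `SL(2,ℂ)`. -/
def uMat (t : ℂ) : SL2C := ⟨!![1, t; 0, 1], by simp [Matrix.det_fin_two_of]⟩

/-- `u_t = π [[1, t],[0, 1]]` for `t ∈ ℝ`. -/
def uu (t : ℝ) : PSL2C := pr (uMat t)

/-- `v_s = π [[1, is],[0, 1]]` for `s ∈ ℝ`. -/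
def vv (s : ℝ) : PSL2C := pr (uMat (s * Complex.I))

/-- The subgroup `U = {u_t : t ∈ ℝ}` as a subset of `PSL(2,ℂ)`. -/
def Uset : Set PSL2C := Set.range uu

/-- The subgroup `V = {v_s : s ∈ ℝ}` as a subset of `PSL(2,ℂ)`. -/
def Vset : Set PSL2C := Set.range vv

/-- The subgroup `N = {π [[1, z],[0,1]] : z ∈ ℂ}` as a subset of `PSL(2,ℂ)`. -/
def Nset : Set PSL2C := {x | ∃ z : ℂ, x = pr (uMat z)}

/-- `H = π (SL(2,ℝ))`, the image in `PSL(2,ℂ)` of the real matrices. -/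
def Hset : Set PSL2C :=
  {x | ∃ g : Matrix.SpecialLinearGroup (Fin 2) ℝ,
    x = pr (Matrix.SpecialLinearGroup.map (algebraMap ℝ ℂ) g)}

/-- The upper triangular matrix `[[a, z],[0, a⁻¹]]` as an element of `SL(2,ℂ)`,
for a nonzero real `a`. -/
def tri (a : ℝ) (ha : a ≠ 0) (z : ℂ) : SL2C :=
  ⟨!![(a : ℂ), z; 0, (a : ℂ)⁻¹], by
    have h : (a : ℂ) ≠ 0 := by exact_mod_cast ha
    simp [Matrix.det_fin_two_of, mul_inv_cancel₀ h]⟩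

/-- `AN = {π [[a, z],[0, a⁻¹]] : a > 0 real, z ∈ ℂ}`. -/
def ANset : Set PSL2C := {x | ∃ (a : ℝ) (ha : 0 < a) (z : ℂ), x = pr (tri a ha.ne' z)}

/-- `AV = {π [[a, ib],[0, a⁻¹]] : a > 0 real, b ∈ ℝ}`. -/
def AVset : Set PSL2C :=
  {x | ∃ (a : ℝ) (ha : 0 < a) (b : ℝ), x = pr (tri a ha.ne' (b * Complex.I))}

/-- `A = {π diag(a, a⁻¹) : a > 0 real}`. -/
def Aset : Set PSL2C := {x | ∃ (a : ℝ) (ha : 0 < a), x = pr (tri a ha.ne' 0)}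

variable (Γ : Subgroup PSL2C)

/-- The space `Γ\\G` of right cosets `Γg`, with the quotient topology. -/
abbrev XΓ := Quotient (QuotientGroup.rightRel Γ)

/-- The natural projection `G → Γ\\G`. -/
def mkX (g : PSL2C) : XΓ Γ := Quotient.mk'' g

/-- The right translation action of `G` on `Γ\\G`: `(Γg₀)·g = Γ(g₀g)`. -/
def act (x : XΓ Γ) (g : PSL2C) : XΓ Γ :=
  Quotient.map' (fun h => h * g)
    (fun a b hab => by
      rw [QuotientGroup.rightRel_apply] at hab ⊢
      simpa [_root_.mul_inv_rev, mul_assoc] using hab) x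

/-- The orbit `xS = {x·s : s ∈ S}` of a point `x ∈ Γ\\G` under a subset `S ⊆ G`. -/
def orb (x : XΓ Γ) (S : Set PSL2C) : Set (XΓ Γ) := (fun s => act Γ x s) '' S

/-- `Γ` is a lattice in `G`: there is a nonzero finite Borel measure on `Γ\\G`
invariant under the right translation action of `G`. -/
def IsLattice : Prop :=
  letI : MeasurableSpace (XΓ Γ) := borel _
  ∃ μ : MeasureTheory.Measure (XΓ Γ), μ ≠ 0 ∧ MeasureTheory.IsFiniteMeasure μ ∧
    ∀ g : PSL2C, MeasureTheory.Measure.map (fun x => act Γ x g) μ = μ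

/-!
A closed orbit `xH` lifts to a `Γ`-orbit `Λ` in `G ⧸ H` that is closed and countable, hence
discrete by the Baire category theorem. Cover the lifts of `xH` by the disjoint open Voronoi cells
of `Λ`, pulled back to `G`. Cosets of `H` are connected, so a coset inside the union of the cells
lies in a single one. Translating back, the whole `H`-orbit of one point of `G ⧸ H` stays near the
base point. The map `m ↦ m · m̄⁻¹` identifies `SL(2,ℂ) ⧸ SL(2,ℝ)` with a set of matrices on which
`SL(2,ℝ)` acts by conjugation, and a matrix all of whose `SL(2,ℝ)`-conjugates stay bounded is
scalar, so the base point is the only point with this property.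
-/

open Set Topology Pointwise MulAction DoubleCoset

theorem exists_isOpen_singleton_of_countable (X : Type*) [TopologicalSpace X] [T1Space X]
    [BaireSpace X] [Countable X] [Nonempty X] : ∃ x : X, IsOpen {x} := by
  obtain ⟨x, hx⟩ := nonempty_interior_of_iUnion_of_closed (f := fun x : X => {x})
    (fun _ => isClosed_singleton) (iUnion_of_singleton X)
  exact ⟨x, interior_eq_iff_isOpen.mp (hx.subset_singleton_iff.mp interior_subset)⟩

theorem discreteTopology_of_countable_of_isPretransitive (G X : Type*) [Group G] [MulAction G X]
    [IsPretransitive G X] [TopologicalSpace X] [ContinuousConstSMul G X] [T1Space X]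
    [BaireSpace X] [Countable X] : DiscreteTopology X := by
  refine discreteTopology_iff_isOpen_singleton.mpr fun y => ?_
  have : Nonempty X := ⟨y⟩
  obtain ⟨x, hx⟩ := exists_isOpen_singleton_of_countable X
  obtain ⟨g, rfl⟩ := exists_smul_eq G x y
  simpa only [smul_set_singleton] using hx.smul g

theorem discreteTopology_orbit_of_isClosed {G X : Type*} [Group G] [Countable G] [MulAction G X]
    [TopologicalSpace X] [ContinuousConstSMul G X] [T2Space X] [LocallyCompactSpace X] {x : X}
    (hx : IsClosed (orbit G x)) : DiscreteTopology (orbit G x) := by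
  have : LocallyCompactSpace (orbit G x) := hx.isClosedEmbedding_subtypeVal.locallyCompactSpace
  have : ContinuousConstSMul G (orbit G x) :=
    IsInducing.subtypeVal.continuousConstSMul id (by intros; rfl)
  have : Countable (orbit G x) := (countable_range fun g : G => g • x).to_subtype
  exact discreteTopology_of_countable_of_isPretransitive G (orbit G x)

section VoronoiCell

variable {G X : Type*} [Group G] [MulAction G X] [PseudoMetricSpace X]

/-- The Voronoi cell of `x ∈ Λ` with respect to the base point `o`, pulled back to the group `G`:
the set of `p` for which `p⁻¹` brings `x` into `B` and closer to `o` than any other point of `Λ`.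
Comparing distances after translation by `p⁻¹` makes the cells equivariant although `dist` need
not be invariant; the truncation by `B` bounds the cells uniformly. -/
def voronoiCell (o : X) (B Λ : Set X) (x : X) : Set G :=
  {p | p⁻¹ • x ∈ B ∧ ∀ y ∈ Λ, y ≠ x → dist (p⁻¹ • x) o < dist (p⁻¹ • y) o}

variable {o : X} {B Λ : Set X}

theorem voronoiCell_smul (g : G) (x : X) :
    voronoiCell o B (g • Λ) (g • x) = g • (voronoiCell o B Λ x : Set G) := by
  ext p
  simp only [mem_smul_set_iff_inv_smul_mem, voronoiCell, mem_ofPred_eq, smul_eq_mul,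
    _root_.mul_inv_rev, inv_inv, smul_smul]
  refine and_congr_right fun _ => ⟨fun h y hy hyx => ?_, fun h y hy hyx => ?_⟩
  · simpa only [smul_smul] using
      h (g • y) (by simpa only [inv_smul_smul] using hy) ((MulAction.injective g).ne hyx)
  · simpa only [smul_smul, inv_mul_cancel_right, mul_inv_cancel_right] using
      h (g⁻¹ • y) hy fun h' => hyx (inv_smul_eq_iff.mp h')

theorem disjoint_voronoiCell {x y : X} (hx : x ∈ Λ) (hy : y ∈ Λ) (hxy : x ≠ y) :
    Disjoint (voronoiCell o B Λ x : Set G) (voronoiCell o B Λ y) :=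
  Set.disjoint_left.mpr fun _ hpx hpy => lt_asymm (hpx.2 y hy hxy.symm) (hpy.2 x hx hxy)

variable [TopologicalSpace G]

theorem subset_interior_voronoiCell {S : Set G} (hS : IsPreconnected S)
    (hSΛ : S ⊆ ⋃ x ∈ Λ, interior (voronoiCell o B Λ x)) {x : X} (hx : x ∈ Λ)
    (hSx : (S ∩ interior (voronoiCell o B Λ x)).Nonempty) :
    S ⊆ interior (voronoiCell o B Λ x) := by
  refine hS.subset_left_of_subset_union (v := ⋃ y ∈ Λ \ {x}, interior (voronoiCell o B Λ y))
    isOpen_interior (isOpen_biUnion fun _ _ => isOpen_interior) ?_ (fun p hp => ?_) hSx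
  · simp only [disjoint_iUnion_right]
    exact fun y hy => (disjoint_voronoiCell hx hy.1 (Ne.symm hy.2)).mono
      interior_subset interior_subset
  · obtain ⟨y, hy, hpy⟩ := mem_iUnion₂.mp (hSΛ hp)
    by_cases hyx : y = x
    · exact Or.inl (hyx ▸ hpy)
    · exact Or.inr (mem_iUnion₂.mpr ⟨y, ⟨hy, hyx⟩, hpy⟩)

theorem mem_interior_voronoiCell [ContinuousInv G] [ContinuousSMul G X] [DiscreteTopology Λ]
    (hB : B ∈ 𝓝 o) {p : G} (hp : p • o ∈ Λ) :
    p ∈ interior (voronoiCell o B Λ (p • o) : Set G) := by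
  obtain ⟨U, hU, hUΛ⟩ : ∃ U ∈ 𝓝 (p • o), U ∩ Λ = {p • o} :=
    nhds_inter_eq_singleton_of_mem_discrete ⟨‹_›⟩ hp
  have hlim : Tendsto (fun q : G × X => q.1 • q.2) (𝓝 p ×ˢ 𝓝 o) (𝓝 (p • o)) := by
    rw [← nhds_prod_eq]
    exact continuous_smul.tendsto (p, o)
  obtain ⟨P, hP, V, hV, hPV⟩ := mem_prod_iff.mp (hlim hU)
  obtain ⟨r, hr, hrV⟩ := Metric.mem_nhds_iff.mp hV
  have hcont : Tendsto (fun q : G => q⁻¹ • p • o) (𝓝 p) (𝓝 o) := by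
    have : Continuous fun q : G => q⁻¹ • p • o := by fun_prop
    simpa only [inv_smul_smul] using this.tendsto p
  rw [mem_interior_iff_mem_nhds]
  filter_upwards [hP, hcont hB, hcont (Metric.ball_mem_nhds o hr)] with q hqP hqB hqr
  refine ⟨hqB, fun y hy hyp => hqr.trans_le (not_lt.mp fun hyr => hyp ?_)⟩
  have hyU : y ∈ U := by
    simpa only [mem_preimage, smul_inv_smul] using hPV (mk_mem_prod hqP (hrV hyr))
  exact hUΛ.subset ⟨hyU, hy⟩

theorem smul_iUnion_interior_voronoiCell [ContinuousMul G] (g : G) :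
    g • (⋃ x ∈ Λ, interior (voronoiCell o B Λ x) : Set G) =
      ⋃ x ∈ g • Λ, interior (voronoiCell o B (g • Λ) x) := by
  simp only [smul_set_iUnion, ← interior_smul, ← voronoiCell_smul]
  exact (biUnion_image (f := (g • ·)) (g := fun x => interior (voronoiCell o B _ x))).symm

theorem smul_mem_of_subset_iUnion_interior_voronoiCell [ContinuousMul G] {H : Subgroup G}
    (hH : IsPreconnected (H : Set G)) (hB : ∀ y : X, (∀ h ∈ H, h • y ∈ B) → y = o) {g : G}
    (hg : g • (H : Set G) ⊆ ⋃ x ∈ Λ, interior (voronoiCell o B Λ x)) : g • o ∈ Λ := by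
  have hgH : g ∈ g • (H : Set G) := by simpa using smul_mem_smul_set (a := g) H.one_mem
  obtain ⟨x, hx, hgx⟩ := mem_iUnion₂.mp (hg hgH)
  have hcell := subset_interior_voronoiCell (hH.image _ (continuous_const_smul g).continuousOn)
    hg hx ⟨g, hgH, hgx⟩
  have hfix : g⁻¹ • x = o := hB _ fun h hh => by
    have := (interior_subset (hcell (smul_mem_smul_set (H.inv_mem hh)))).1
    simpa only [smul_eq_mul, _root_.mul_inv_rev, inv_inv, mul_smul] using this
  rwa [← hfix, smul_inv_smul]

end VoronoiCell

section CosetSpace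

variable {G : Type*} [Group G] (Γ H : Subgroup G)

theorem mk_mem_orbit_mk_iff (g p : G) :
    (p : G ⧸ H) ∈ orbit Γ (g : G ⧸ H) ↔ p ∈ doubleCoset g Γ H := by
  constructor
  · rintro ⟨⟨γ, hγ⟩, hp : ((γ * g : G) : G ⧸ H) = p⟩
    exact mem_doubleCoset.mpr ⟨γ, hγ, _, QuotientGroup.eq.mp hp, by group⟩
  · intro hp
    obtain ⟨γ, hγ, h, hh, rfl⟩ := mem_doubleCoset.mp hp
    exact ⟨⟨γ, hγ⟩, (QuotientGroup.mk_mul_of_mem (γ * g) hh).symm⟩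

theorem exists_isOpen_forall_smul_subset_imp_mem_doubleCoset [TopologicalSpace G]
    [IsTopologicalGroup G] [LocallyCompactSpace G] [SecondCountableTopology G] [Countable Γ]
    [IsClosed (H : Set G)] (hH : IsPreconnected (H : Set G)) {B : Set (G ⧸ H)}
    (hB : B ∈ 𝓝 ((1 : G) : G ⧸ H))
    (hBfix : ∀ y : G ⧸ H, (∀ h ∈ H, h • y ∈ B) → y = ((1 : G) : G ⧸ H)) {g : G}
    (hg : IsClosed (doubleCoset g (Γ : Set G) H)) :
    ∃ O : Set G, IsOpen O ∧ (∀ γ ∈ Γ, γ • O = O) ∧ g • (H : Set G) ⊆ O ∧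
      ∀ p : G, p • (H : Set G) ⊆ O → p ∈ doubleCoset g (Γ : Set G) H := by
  have hΛclosed : IsClosed (orbit Γ (g : G ⧸ H)) := by
    rw [← (QuotientGroup.isQuotientMap_mk H).isClosed_preimage]
    convert! hg using 1
    exact Set.ext fun p => mk_mem_orbit_mk_iff Γ H g p
  have : ContinuousConstSMul Γ (G ⧸ H) := ⟨fun γ => continuous_const_smul (γ : G)⟩
  have := discreteTopology_orbit_of_isClosed hΛclosed
  let := TopologicalSpace.pseudoMetrizableSpacePseudoMetric (G ⧸ H)
  set Λ := orbit Γ (g : G ⧸ H)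
  set O : Set G := ⋃ x ∈ Λ, interior (voronoiCell ((1 : G) : G ⧸ H) B Λ x)
  have smul_mk_one (p : G) : p • ((1 : G) : G ⧸ H) = p := by
    rw [MulAction.Quotient.smul_coe, smul_eq_mul, mul_one]
  have hΓO : ∀ γ ∈ Γ, γ • O = O := fun γ hγ => by
    have hΛ : γ • Λ = Λ := smul_orbit (⟨γ, hγ⟩ : Γ) (g : G ⧸ H)
    rw [smul_iUnion_interior_voronoiCell, hΛ]
  refine ⟨O, isOpen_biUnion fun _ _ => isOpen_interior, hΓO, ?_, fun p hp => ?_⟩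
  · rintro _ ⟨h, hh, rfl⟩
    have hgh : ((g * h : G) : G ⧸ H) = g := QuotientGroup.mk_mul_of_mem g hh
    have hmem : (g * h) • ((1 : G) : G ⧸ H) ∈ Λ := by
      rw [smul_mk_one, hgh]
      exact mem_orbit_self _
    exact mem_biUnion hmem (mem_interior_voronoiCell hB hmem)
  · rw [← mk_mem_orbit_mk_iff]
    exact smul_mk_one p ▸ smul_mem_of_subset_iUnion_interior_voronoiCell hH hBfix hp

end CosetSpace

section SpecialLinear

theorem preconnectedSpace_SL2 (K : Type*) [Field K] [TopologicalSpace K] [IsTopologicalRing K]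
    [PreconnectedSpace K] : PreconnectedSpace SL(2, K) := by
  have hmem : ∀ A : SL(2, K), A ∈ Subgroup.connectedComponentOfOne SL(2, K) := by
    refine SL2.transvection_induction _ (fun i j hij c => ?_) fun _ _ => mul_mem
    have hcont : Continuous fun c : K => Matrix.SpecialLinearGroup.transvection hij c := by
      refine Continuous.subtype_mk (f := fun c => 1 + Matrix.single i j c) ?_ _
      refine continuous_const.add (continuous_matrix fun k l => ?_)
      simp only [single_apply]
      split_ifs <;> fun_prop
    exact (isPreconnected_range hcont).subset_connectedComponent
      ⟨0, Matrix.SpecialLinearGroup.transvection_coeff_zero hij⟩ ⟨c, rfl⟩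
  rw [preconnectedSpace_iff_univ, ← eq_univ_of_forall hmem]
  exact isPreconnected_connectedComponent

theorem eq_zero_of_forall_norm_add_smul_le {E : Type*} [NormedAddCommGroup E] [NormedSpace ℝ E]
    {a b : E} {C : ℝ} (h : ∀ t : ℝ, ‖a + t • b‖ ≤ C) : b = 0 := by
  by_contra hb
  have hb : 0 < ‖b‖ := norm_pos_iff.mpr hb
  have hC : 0 ≤ C := (norm_nonneg _).trans (h 0)
  set t : ℝ := (C + ‖a‖ + 1) / ‖b‖ with ht
  have htb : ‖t • b‖ = C + ‖a‖ + 1 := by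
    rw [norm_smul, Real.norm_of_nonneg (by positivity), ht, div_mul_cancel₀ _ hb.ne']
  have htri : ‖t • b‖ ≤ ‖a + t • b‖ + ‖a‖ := by
    simpa only [add_sub_cancel_left] using norm_sub_le (a + t • b) a
  linarith [h t]

theorem SL2_conj_apply_zero {R : Type*} [CommRing R] (P M : SL(2, R)) (i : Fin 2) :
    (P * M * P⁻¹) i 0 = (P i 0 * M 0 0 + P i 1 * M 1 0) * P 1 1 -
      (P i 0 * M 0 1 + P i 1 * M 1 1) * P 1 0 := by
  simp [Matrix.mul_apply, adjugate_fin_two, sub_eq_add_neg]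

variable {A : Type*} [NormedCommRing A] [NormedAlgebra ℝ A]

theorem apply_one_zero_eq_zero_of_forall_norm_conj_le {M : SL(2, A)} {C : ℝ}
    (hM : ∀ g : SL(2, ℝ), ‖(g.map (algebraMap ℝ A) * M * (g.map (algebraMap ℝ A))⁻¹) 0 0‖ ≤ C) :
    M 1 0 = 0 := by
  -- Conjugation by the upper unipotent `t` turns the entry `M 0 0` into `M 0 0 + t • M 1 0`.
  refine eq_zero_of_forall_norm_add_smul_le (a := M 0 0) (C := C) fun t => ?_
  simpa [SL2_conj_apply_zero, Matrix.SpecialLinearGroup.transvection_coe, Algebra.smul_def] using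
    hM (Matrix.SpecialLinearGroup.transvection zero_ne_one t)

-- The left-hand side is the `(1, 0)` entry of the conjugate of `M` by the lower unipotent `s`.
theorem add_smul_sub_sq_smul_eq_zero_of_forall_norm_conj_le {M : SL(2, A)} {C : ℝ}
    (hM : ∀ g : SL(2, ℝ), ‖(g.map (algebraMap ℝ A) * M * (g.map (algebraMap ℝ A))⁻¹) 0 0‖ ≤ C)
    (s : ℝ) : M 1 0 + s • (M 0 0 - M 1 1) - s ^ 2 • M 0 1 = 0 := by
  let L : SL(2, ℝ) := Matrix.SpecialLinearGroup.transvection one_ne_zero s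
  let N : SL(2, A) := L.map (algebraMap ℝ A) * M * (L.map (algebraMap ℝ A))⁻¹
  have hN : N 1 0 = 0 := apply_one_zero_eq_zero_of_forall_norm_conj_le (C := C) fun g => by
    have hgL := hM (g * L)
    rw [map_mul, _root_.mul_inv_rev] at hgL
    simpa only [N, mul_assoc] using hgL
  rw [← hN, SL2_conj_apply_zero]
  simp only [L, Matrix.SpecialLinearGroup.map_apply_coe,
    Matrix.SpecialLinearGroup.transvection_coe, RingHom.mapMatrix_apply, map_apply,
    Matrix.add_apply, Algebra.smul_def, map_pow, map_one, one_apply_eq, one_apply_ne,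
    single_apply_same, single_apply_of_ne, ne_eq, one_ne_zero, zero_ne_one, not_false_eq_true,
    and_false, zero_add, add_zero]
  ring

theorem mem_center_of_forall_norm_conj_le {M : SL(2, A)} {C : ℝ}
    (hM : ∀ g : SL(2, ℝ), ‖(g.map (algebraMap ℝ A) * M * (g.map (algebraMap ℝ A))⁻¹) 0 0‖ ≤ C) :
    M ∈ Subgroup.center SL(2, A) := by
  have hquad := add_smul_sub_sq_smul_eq_zero_of_forall_norm_conj_le hM
  have h10 : M 1 0 = 0 := by simpa using hquad 0
  have hpos : (M 0 0 - M 1 1) - M 0 1 = 0 := by simpa [h10] using hquad 1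
  have hneg : -(M 0 0 - M 1 1) - M 0 1 = 0 := by simpa [h10] using hquad (-1)
  have h01 : M 0 1 = 0 := by
    have h2 : (2 : ℝ) • M 0 1 = 0 := by
      rw [two_smul]
      linear_combination -hpos - hneg
    exact (smul_eq_zero.mp h2).resolve_left two_ne_zero
  have h00 : M 0 0 = M 1 1 := by
    linear_combination hpos + h01
  refine Matrix.SpecialLinearGroup.mem_center_iff.mpr ⟨M 0 0, ?_, ?_⟩
  · have hdet := M.det_coe
    rw [det_fin_two] at hdet
    rw [Fintype.card_fin]
    linear_combination hdet + M 0 0 * h00 + h10 * M 0 1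
  · ext i j
    fin_cases i <;> fin_cases j <;> simp [h10, h01, h00]

theorem eq_one_of_forall_norm_conj_sub_one_lt_one {M : SL(2, ℂ)}
    (hM : ∀ g : SL(2, ℝ),
      ‖(g.map (algebraMap ℝ ℂ) * M * (g.map (algebraMap ℝ ℂ))⁻¹) 0 0 - 1‖ < 1) : M = 1 := by
  have hcenter : M ∈ Subgroup.center SL(2, ℂ) :=
    mem_center_of_forall_norm_conj_le (C := 2) fun g => by
      have htri := norm_le_norm_sub_add
        ((g.map (algebraMap ℝ ℂ) * M * (g.map (algebraMap ℝ ℂ))⁻¹) 0 0) 1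
      rw [norm_one] at htri
      linarith [hM g]
  obtain ⟨r, hr, hrM⟩ := Matrix.SpecialLinearGroup.mem_center_iff.mp hcenter
  have hr1 : ‖r - 1‖ < 1 := by simpa [← hrM] using hM 1
  obtain rfl | rfl : r = 1 ∨ r = -1 := by simpa using hr
  · exact Subtype.ext (by simpa using hrM.symm)
  · norm_num at hr1

end SpecialLinear

section Topology

instance : IsTopologicalGroup SL2C := Matrix.SpecialLinearGroup.topologicalGroup

instance : T2Space SL2C := inferInstanceAs (T2Space {A : Matrix (Fin 2) (Fin 2) ℂ // A.det = 1})

instance : SecondCountableTopology SL2C :=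
  inferInstanceAs (SecondCountableTopology {A : Fin 2 → Fin 2 → ℂ // Matrix.det A = 1})

instance : LocallyCompactSpace SL2C :=
  have : LocallyCompactSpace (Matrix (Fin 2) (Fin 2) ℂ) :=
    inferInstanceAs (LocallyCompactSpace (Fin 2 → Fin 2 → ℂ))
  Matrix.SpecialLinearGroup.isClosedEmbedding_val.locallyCompactSpace

instance : SecondCountableTopology PSL2C :=
  QuotientGroup.instSecondCountableTopology (N := Subgroup.center SL2C)

end Topology

section RealForm

/-- The inclusion `SL(2,ℝ) → SL(2,ℂ)`. -/
abbrev complexify : SL(2, ℝ) →* SL2C := Matrix.SpecialLinearGroup.map (algebraMap ℝ ℂ)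

/-- Entrywise complex conjugation on `SL(2,ℂ)`. -/
abbrev conjSL2C : SL2C →* SL2C := Matrix.SpecialLinearGroup.map (starRingEnd ℂ)

theorem mem_range_complexify_iff {m : SL2C} : m ∈ complexify.range ↔ conjSL2C m = m := by
  constructor
  · rintro ⟨g, rfl⟩
    ext i j
    simp
  · intro hm
    have hre (i j) : ((m i j).re : ℂ) = m i j := by
      rw [← Complex.conj_eq_iff_re]
      simpa using congr_fun₂ (congr_arg Subtype.val hm) i j
    have hmap : (m.1.map Complex.re).map (algebraMap ℝ ℂ) = m := Matrix.ext hre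
    refine ⟨⟨m.1.map Complex.re, (algebraMap ℝ ℂ).injective ?_⟩, Subtype.ext hmap⟩
    rw [RingHom.map_det, RingHom.mapMatrix_apply, hmap, m.det_coe, map_one]

theorem center_le_range_complexify : Subgroup.center SL2C ≤ complexify.range := by
  intro z hz
  obtain ⟨r, hr, hz⟩ := Matrix.SpecialLinearGroup.mem_center_iff.mp hz
  obtain rfl | rfl : r = 1 ∨ r = -1 := by simpa using hr
  all_goals
    rw [mem_range_complexify_iff]
    ext i j
    simp [← hz, diagonal_apply, Matrix.one_apply, apply_ite]

theorem continuous_conjSL2C : Continuous conjSL2C :=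
  Complex.continuous_conj.specialLinearGroup_map

/-- The invariant `m ↦ m · m̄⁻¹` separating the cosets `m SL(2,ℝ)` in `SL(2,ℂ)`: it measures how
far `m` is from being real. -/
def realDefect (m : SL2C) : SL2C := m * (conjSL2C m)⁻¹

theorem realDefect_eq_realDefect_iff {m n : SL2C} :
    realDefect m = realDefect n ↔ m⁻¹ * n ∈ complexify.range := by
  rw [mem_range_complexify_iff, map_mul, map_inv, ← eq_mul_inv_iff_mul_eq, mul_assoc,
    eq_inv_mul_iff_mul_eq, realDefect, realDefect]

theorem realDefect_one : realDefect 1 = 1 := by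
  rw [realDefect, map_one, inv_one, mul_one]

theorem realDefect_complexify_mul (g : SL(2, ℝ)) (m : SL2C) :
    realDefect (complexify g * m) = complexify g * realDefect m * (complexify g)⁻¹ := by
  rw [realDefect, map_mul, mem_range_complexify_iff.mp ⟨g, rfl⟩, realDefect, _root_.mul_inv_rev]
  group

theorem continuous_realDefect : Continuous realDefect :=
  continuous_id.mul continuous_conjSL2C.inv

/-- `H = π(SL(2,ℝ))` as a subgroup of `PSL(2,ℂ)`. -/
def realSubgroup : Subgroup PSL2C := (pr.comp complexify).range

theorem coe_realSubgroup : (realSubgroup : Set PSL2C) = Hset :=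
  Set.ext fun _ => exists_congr fun _ => eq_comm

theorem pr_mem_realSubgroup_iff {m : SL2C} : pr m ∈ realSubgroup ↔ m ∈ complexify.range := by
  constructor
  · rintro ⟨g, hg⟩
    have := center_le_range_complexify (QuotientGroup.eq.mp hg)
    rwa [mul_mem_cancel_left (inv_mem (MonoidHom.mem_range.mpr ⟨g, rfl⟩))] at this
  · rintro ⟨g, rfl⟩
    exact ⟨g, rfl⟩

theorem isClosed_realSubgroup : IsClosed (realSubgroup : Set PSL2C) := by
  rw [← (QuotientGroup.isQuotientMap_mk (Subgroup.center SL2C)).isClosed_preimage]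
  have : QuotientGroup.mk ⁻¹' (realSubgroup : Set PSL2C) = {m : SL2C | conjSL2C m = m} :=
    Set.ext fun m => pr_mem_realSubgroup_iff.trans mem_range_complexify_iff
  rw [this]
  exact isClosed_eq continuous_conjSL2C continuous_id

theorem isPreconnected_realSubgroup : IsPreconnected (realSubgroup : Set PSL2C) := by
  have := preconnectedSpace_SL2 ℝ
  exact isPreconnected_range <| QuotientGroup.continuous_mk.comp
    (Complex.continuous_ofReal.specialLinearGroup_map (n := Fin 2))

theorem mk_pr_eq_mk_pr_iff {m n : SL2C} :
    (pr m : PSL2C ⧸ realSubgroup) = pr n ↔ realDefect m = realDefect n := by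
  rw [QuotientGroup.eq, ← map_inv, ← map_mul, pr_mem_realSubgroup_iff,
    realDefect_eq_realDefect_iff]

theorem exists_mem_nhds_one_forall_smul_mem_imp_eq_one :
    ∃ B ∈ 𝓝 ((1 : PSL2C) : PSL2C ⧸ realSubgroup), ∀ y : PSL2C ⧸ realSubgroup,
      (∀ h ∈ realSubgroup, h • y ∈ B) → y = ((1 : PSL2C) : PSL2C ⧸ realSubgroup) := by
  let V : Set SL2C := {m | ‖(realDefect m) 0 0 - 1‖ < 1}
  have hV : IsOpen V := by
    have h00 : Continuous fun m : SL2C => realDefect m 0 0 :=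
      continuous_realDefect.subtype_val.matrix_elem 0 0
    exact isOpen_lt (h00.sub continuous_const).norm continuous_const
  have hopen : IsOpenMap fun m : SL2C => (pr m : PSL2C ⧸ realSubgroup) :=
    QuotientGroup.isOpenMap_coe.comp QuotientGroup.isOpenMap_coe
  refine ⟨(fun m : SL2C => (pr m : PSL2C ⧸ realSubgroup)) '' V,
    (hopen V hV).mem_nhds ⟨1, by simp [V, realDefect_one], rfl⟩, fun y hy => ?_⟩
  obtain ⟨m, rfl⟩ : ∃ m : SL2C, (pr m : PSL2C ⧸ realSubgroup) = y :=
    (QuotientGroup.mk_surjective.comp QuotientGroup.mk_surjective) y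
  refine (mk_pr_eq_mk_pr_iff (n := 1)).mpr (.trans ?_ realDefect_one.symm)
  refine eq_one_of_forall_norm_conj_sub_one_lt_one fun g => ?_
  obtain ⟨n, hn, hnm⟩ := hy (pr (complexify g)) ⟨g, rfl⟩
  have hnm : realDefect n = realDefect (complexify g * m) := mk_pr_eq_mk_pr_iff.mp hnm
  rw [← realDefect_complexify_mul, ← hnm]
  exact hn

end RealForm

section RightCosets

variable {Γ}

theorem mkX_surjective : Function.Surjective (mkX Γ) := Quotient.mk''_surjective

theorem isQuotientMap_mkX : IsQuotientMap (mkX Γ) := isQuotientMap_quotient_mk'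

theorem mkX_eq_mkX_iff {g p : PSL2C} : mkX Γ g = mkX Γ p ↔ p * g⁻¹ ∈ Γ :=
  Quotient.eq''.trans (QuotientGroup.rightRel_apply ..)

theorem preimage_mkX_orb (g : PSL2C) (S : Set PSL2C) :
    mkX Γ ⁻¹' orb Γ (mkX Γ g) S = doubleCoset g (Γ : Set PSL2C) S := by
  ext p
  rw [mem_doubleCoset]
  constructor
  · rintro ⟨s, hs, hp : mkX Γ (g * s) = mkX Γ p⟩
    exact ⟨_, mkX_eq_mkX_iff.mp hp, s, hs, by group⟩
  · rintro ⟨γ, hγ, s, hs, rfl⟩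
    refine ⟨s, hs, (mkX_eq_mkX_iff.mpr ?_ : mkX Γ (g * s) = _)⟩
    simpa [mul_assoc] using hγ

theorem preimage_mkX_image_mkX {O : Set PSL2C} (hO : ∀ γ ∈ Γ, γ • O ⊆ O) :
    mkX Γ ⁻¹' (mkX Γ '' O) = O := by
  refine (subset_preimage_image _ _).antisymm' ?_
  rintro p ⟨q, hq, hqp⟩
  simpa using hO _ (mkX_eq_mkX_iff.mp hqp) (smul_mem_smul_set hq)

theorem orb_eq_orb_of_mem_doubleCoset {g p : PSL2C}
    (hp : p ∈ doubleCoset g (Γ : Set PSL2C) realSubgroup) :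
    orb Γ (mkX Γ p) Hset = orb Γ (mkX Γ g) Hset := by
  apply mkX_surjective.preimage_injective
  rw [preimage_mkX_orb, preimage_mkX_orb, ← coe_realSubgroup, doubleCoset_eq_of_mem hp]

end RightCosets

theorem closed_H_orbit_isolated_general (Γ : Subgroup PSL2C) [Countable Γ] (x : XΓ Γ)
    (hx : IsClosed (orb Γ x Hset)) :
    ∃ O : Set (XΓ Γ), IsOpen O ∧ orb Γ x Hset ⊆ O ∧
      ∀ y : XΓ Γ, orb Γ y Hset ⊆ O → orb Γ y Hset = orb Γ x Hset := by
  obtain ⟨g, rfl⟩ := mkX_surjective x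
  obtain ⟨B, hB, hBfix⟩ := exists_mem_nhds_one_forall_smul_mem_imp_eq_one
  have hg : IsClosed (doubleCoset g (Γ : Set PSL2C) realSubgroup) := by
    rw [coe_realSubgroup, ← preimage_mkX_orb]
    exact hx.preimage isQuotientMap_mkX.continuous
  have := isClosed_realSubgroup
  obtain ⟨O, hO, hΓO, hgO, hOg⟩ := exists_isOpen_forall_smul_subset_imp_mem_doubleCoset Γ
    realSubgroup isPreconnected_realSubgroup hB hBfix hg
  have hpre := preimage_mkX_image_mkX fun γ hγ => (hΓO γ hγ).subset
  refine ⟨mkX Γ '' O, isQuotientMap_mkX.isOpen_preimage.mp (hpre.symm ▸ hO), ?_, fun y hy => ?_⟩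
  · rintro _ ⟨h, hh, rfl⟩
    exact mem_image_of_mem _ (hgO (smul_mem_smul_set (coe_realSubgroup ▸ hh)))
  · obtain ⟨p, rfl⟩ := mkX_surjective y
    refine orb_eq_orb_of_mem_doubleCoset (hOg p ?_)
    rintro _ ⟨h, hh, rfl⟩
    exact hpre.subset (hy ⟨h, coe_realSubgroup ▸ hh, rfl⟩)

/-- If `Γ` is a lattice in `PSL(2,ℂ)` and `xH` is a closed `H`-orbit, then `xH`
is topologically isolated: there is an open set `O ⊇ xH` such that the only
closed `H`-orbit entirely contained in `O` is `xH` itself. -/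
theorem closed_H_orbit_isolated
    (Γ : Subgroup PSL2C) (hdisc : DiscreteTopology Γ) (hlat : IsLattice Γ)
    (x : XΓ Γ) (hx : IsClosed (orb Γ x Hset)) :
    ∃ O : Set (XΓ Γ), IsOpen O ∧ orb Γ x Hset ⊆ O ∧
      ∀ y : XΓ Γ, IsClosed (orb Γ y Hset) → orb Γ y Hset ⊆ O →
        orb Γ y Hset = orb Γ x Hset := by
  have : Countable Γ := countable_of_Lindelof_of_discrete
  obtain ⟨O, hO, hxO, hOx⟩ := closed_H_orbit_isolated_general Γ x hx
  exact ⟨O, hO, hxO, fun y _ => hOx y⟩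

end
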